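/- Let n, r ∈ ℕ with n ≥ 3 and r ≥ 4, and let k ∈ ℕ₀. Then SD_k(C_n^r) ≥ SD_{k+r−1}(C_n) + (r−1)(n−1). Moreover, if D(C_n^r) = D*(C_n^r) (in particular, if n is a prime power) and r ≥ n − k, then SD_k(C_n^r) = D*(C_n^r). Additionally, for n ≥ 3 and k ∈ ℕ₀, SD_k(C_n^3) ≥ D*(C_n^3) − max{1, n − k − 2 − ⌊(−1 + √(1 + 8·max{n − 3 − k, 0}))/2⌋} (real square root, then integer floor). -/

import Mathlib

open Multiset

/-- A sequence (finite multiset) over `G` is zero-sumfree if every nonempty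
subsequence has nonzero sum. -/
def IsZeroSumfree {G : Type*} [AddCommMonoid G] (S : Multiset G) : Prop :=
  ∀ T ≤ S, T ≠ 0 → T.sum ≠ 0

/-- A minimal zero-sum sequence: a nonempty sequence with sum zero all of whose
nonempty proper subsequences have nonzero sum. -/
def IsMinimalZeroSum {G : Type*} [AddCommMonoid G] (S : Multiset G) : Prop :=
  S ≠ 0 ∧ S.sum = 0 ∧ ∀ T ≤ S, T ≠ 0 → T ≠ S → T.sum ≠ 0

/-- The cumulated multiplicity of level `ℓ` of a sequence:
`cm_ℓ(S) = Σ_{g ∈ G} max {0, v_g(S) − ℓ}`. -/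
noncomputable def cmul {G : Type*} [AddCommMonoid G] (ℓ : ℕ) (S : Multiset G) : ℕ :=
  letI := Classical.decEq G
  ∑ g ∈ S.toFinset, (S.count g - ℓ)

/-- `SD_{(k,ℓ)}(G)`: the maximum length of a minimal zero-sum sequence `S` over `G`
with `cm_ℓ(S) ≤ k`. -/
noncomputable def SDpair (G : Type*) [AddCommMonoid G] (k ℓ : ℕ) : ℕ :=
  sSup {m | ∃ S : Multiset G, IsMinimalZeroSum S ∧ cmul ℓ S ≤ k ∧ Multiset.card S = m}

/-- `SD_k(G)`: the `k`-th Strong Davenport constant. -/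
noncomputable def SDk (G : Type*) [AddCommMonoid G] (k : ℕ) : ℕ := SDpair G k 1

/-- The Strong Davenport constant `SD(G) = SD_0(G)`. -/
noncomputable def SD (G : Type*) [AddCommMonoid G] : ℕ := SDk G 0

/-- The Olson constant `Ol(G) = SD_1(G)`. -/
noncomputable def Ol (G : Type*) [AddCommMonoid G] : ℕ := SDk G 1

/-- `ol_k(G)`: the maximum length of a zero-sumfree sequence `S` over `G` with
`cm(S) ≤ k`. -/
noncomputable def olk (G : Type*) [AddCommMonoid G] (k : ℕ) : ℕ :=
  sSup {m | ∃ S : Multiset G, IsZeroSumfree S ∧ cmul 1 S ≤ k ∧ Multiset.card S = m}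

/-- `Ol_k(G)`: the smallest integer `ℓ` such that every sequence `S` over `G` with
`cm(S) ≤ k` and `|S| ≥ ℓ` has a nonempty zero-sum subsequence. -/
noncomputable def Olk (G : Type*) [AddCommMonoid G] (k : ℕ) : ℕ :=
  sInf {m | ∀ S : Multiset G, cmul 1 S ≤ k → m ≤ Multiset.card S →
    ∃ T, T ≤ S ∧ T ≠ 0 ∧ T.sum = 0}

/-- The Davenport constant `D(G)`: the maximum length of a minimal zero-sum
sequence over `G`. -/
noncomputable def DavenportD (G : Type*) [AddCommMonoid G] : ℕ :=
  sSup {m | ∃ S : Multiset G, IsMinimalZeroSum S ∧ Multiset.card S = m}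

/-!
Every lower bound comes from one exchange. From a minimal zero-sum sequence over `G`, remove a few
terms so that the cumulated multiplicity drops, and put back distinct terms of `G × C_n^s` with
nonzero second component, chosen so that minimality survives.

With one new coordinate a single term `g` is exchanged for the `n` terms `(x, 1)`, `x ∈ A`, where
`A` consists of `n` distinct elements with sum `g`; such `A` exist for all `g` in `C_n^r` when
`2 ≤ r`. In `C_n` itself they need not exist, so there several terms are exchanged at once:
three terms for `3n` terms over `C_n × C_n^3`, or two distinct terms for `2n` terms over
`C_n × C_n^2`, with second components `e_i`, `e_i + e_{i+1}` and `e_i - e_{i+1}` for cyclic `i`.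
The first exchange leads from `C_n` to `C_n^4`, and new coordinates then raise the rank one by one.

In rank three, exchange the terms `1` and `2` of a sequence of positive integers with sum `n`. The
others have sum `n - 3`: take `k` ones and `t` distinct parts of `n - 3 - k`, which exist as soon
as `t (t + 1) / 2 ≤ n - 3 - k`; this is the source of the square root.
-/

section Subsequences

variable {α β ι : Type*}

theorem exists_eq_add_of_le_add {T U V : Multiset α} (h : T ≤ U + V) :
    ∃ T₁ ≤ U, ∃ T₂ ≤ V, T = T₁ + T₂ := by
  classical
  refine ⟨T ∩ U, inter_le_right, T - U, tsub_le_iff_left.2 h, ?_⟩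
  ext a
  simp only [count_add, count_inter, count_sub]
  omega

theorem exists_eq_sum_of_le_sum (s : Finset ι) {f : ι → Multiset α} {T : Multiset α}
    (h : T ≤ ∑ i ∈ s, f i) : ∃ g : ι → Multiset α, g ≤ f ∧ T = ∑ i ∈ s, g i := by
  classical
  induction s using Finset.induction_on generalizing T with
  | empty => exact ⟨f, le_rfl, by simpa using h⟩
  | insert i s hi ih =>
    rw [Finset.sum_insert hi] at h
    obtain ⟨T₁, hT₁, T₂, hT₂, rfl⟩ := exists_eq_add_of_le_add h
    obtain ⟨g, hg, rfl⟩ := ih hT₂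
    refine ⟨Function.update g i T₁, update_le_iff.2 ⟨hT₁, fun j _ => hg j⟩, ?_⟩
    rw [Finset.sum_insert hi, Function.update_self, Finset.sum_update_of_notMem hi]

theorem exists_eq_map_of_le_map (f : α → β) {T : Multiset β} {U : Multiset α}
    (h : T ≤ U.map f) : ∃ V ≤ U, T = V.map f := by
  induction U using Multiset.induction_on generalizing T with
  | empty => exact ⟨0, le_rfl, by simpa using h⟩
  | cons a U ih =>
    rw [map_cons, ← singleton_add] at h
    obtain ⟨T₁, hT₁, T₂, hT₂, rfl⟩ := exists_eq_add_of_le_add h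
    obtain ⟨V, hV, rfl⟩ := ih hT₂
    rcases Multiset.le_singleton.1 hT₁ with rfl | rfl
    · exact ⟨V, hV.trans (le_cons_self U a), by simp⟩
    · exact ⟨a ::ₘ V, cons_le_cons a hV, by simp⟩

theorem exists_finset_of_le_univ_map [Fintype ι] (f : ι → β) {T : Multiset β}
    (h : T ≤ Finset.univ.val.map f) : ∃ I : Finset ι, T = I.val.map f := by
  obtain ⟨V, hV, rfl⟩ := exists_eq_map_of_le_map f h
  exact ⟨⟨V, nodup_of_le hV Finset.univ.nodup⟩, rfl⟩

theorem sum_map_prodMk {G K : Type*} [AddCommMonoid G] [AddCommMonoid K] (U : Multiset G) (x : K) :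
    (U.map fun g => (g, x)).sum = (U.sum, card U • x) := by
  induction U using Multiset.induction_on with
  | empty => simp [Prod.zero_eq_mk]
  | cons g U ih => simp [ih, add_smul, add_comm]

end Subsequences

section CumulatedMultiplicity

variable {G H : Type*} [AddCommMonoid G] [AddCommMonoid H]

theorem cmul_one_add_card_toFinset [DecidableEq G] (S : Multiset G) :
    cmul 1 S + S.toFinset.card = card S := by
  have hcmul : cmul 1 S = ∑ g ∈ S.toFinset, (S.count g - 1) := by
    unfold cmul
    congr!
  rw [hcmul, Finset.card_eq_sum_ones, ← Finset.sum_add_distrib, ← toFinset_sum_count_eq]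
  refine Finset.sum_congr rfl fun g hg => Nat.sub_add_cancel ?_
  exact one_le_count_iff_mem.2 (mem_toFinset.1 hg)

theorem cmul_one_eq_zero_of_nodup {S : Multiset G} (hS : S.Nodup) : cmul 1 S = 0 := by
  classical
  have := cmul_one_add_card_toFinset S
  rw [toFinset_card_of_nodup hS] at this
  omega

theorem cmul_one_add_le (S T : Multiset G) : cmul 1 (S + T) ≤ cmul 1 S + card T := by
  classical
  have hS := cmul_one_add_card_toFinset S
  have hST := cmul_one_add_card_toFinset (S + T)
  have hle : S.toFinset.card ≤ (S + T).toFinset.card := by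
    rw [toFinset_add]
    exact Finset.card_le_card Finset.subset_union_left
  rw [card_add] at hST
  omega

theorem cmul_one_add_of_disjoint {S T : Multiset G} (h : Disjoint S T) :
    cmul 1 (S + T) = cmul 1 S + cmul 1 T := by
  classical
  have hS := cmul_one_add_card_toFinset S
  have hT := cmul_one_add_card_toFinset T
  have hST := cmul_one_add_card_toFinset (S + T)
  rw [toFinset_add, Finset.card_union_of_disjoint (disjoint_toFinset.2 h), card_add] at hST
  omega

theorem cmul_one_map_of_injOn {f : G → H} {S : Multiset G} (hf : Set.InjOn f {g | g ∈ S}) :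
    cmul 1 (S.map f) = cmul 1 S := by
  classical
  have hS := cmul_one_add_card_toFinset S
  have hfS := cmul_one_add_card_toFinset (S.map f)
  rw [toFinset_map, Finset.card_image_of_injOn (by simpa [Set.InjOn] using hf), card_map] at hfS
  omega

theorem exists_eq_cons_of_cmul_one_le {S : Multiset G} {k : ℕ} (hS : S ≠ 0)
    (hk : cmul 1 S ≤ k + 1) : ∃ g S', S = g ::ₘ S' ∧ cmul 1 S' ≤ k := by
  classical
  by_cases hnodup : S.Nodup
  · obtain ⟨g, hg⟩ := exists_mem_of_ne_zero hS
    obtain ⟨S', rfl⟩ := exists_cons_of_mem hg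
    exact ⟨g, S', rfl, by simp [cmul_one_eq_zero_of_nodup (nodup_cons.1 hnodup).2]⟩
  · obtain ⟨g, R, rfl⟩ : ∃ g R, S = g ::ₘ g ::ₘ R := by
      simpa [nodup_iff_ne_cons_cons] using hnodup
    refine ⟨g, g ::ₘ R, rfl, ?_⟩
    have hR := cmul_one_add_card_toFinset (g ::ₘ R)
    have hgR := cmul_one_add_card_toFinset (g ::ₘ g ::ₘ R)
    simp only [toFinset_cons, Finset.insert_idem, card_cons] at hR hgR
    omega

theorem exists_eq_add_of_cmul_one_le {S : Multiset G} {k m : ℕ} (hm : m ≤ card S)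
    (hk : cmul 1 S ≤ k + m) : ∃ M S', S = M + S' ∧ card M = m ∧ cmul 1 S' ≤ k := by
  induction m generalizing S with
  | zero => exact ⟨0, S, by simp, by simp, hk⟩
  | succ m ih =>
    obtain ⟨g, R, rfl, hR⟩ :=
      exists_eq_cons_of_cmul_one_le (card_pos.1 (by omega)) (k := k + m) hk
    obtain ⟨M, S', rfl, hM, hS'⟩ := ih (by simpa using hm) hR
    exact ⟨g ::ₘ M, S', by simp, by simp [hM], hS'⟩

end CumulatedMultiplicity

section MinimalZeroSum

variable {G H : Type*} [AddCommMonoid G] [AddCommMonoid H]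

theorem IsMinimalZeroSum.eq_zero_or_eq {S T : Multiset G} (hS : IsMinimalZeroSum S)
    (hT : T ≤ S) (h : T.sum = 0) : T = 0 ∨ T = S := by
  by_contra! hne
  exact hS.2.2 T hT hne.1 hne.2 h

theorem IsMinimalZeroSum.map_of_injective {S : Multiset G} (hS : IsMinimalZeroSum S) (f : G →+ H)
    (hf : Function.Injective f) : IsMinimalZeroSum (S.map f) := by
  refine ⟨by simpa using hS.1, by rw [← map_multiset_sum, hS.2.1, _root_.map_zero], ?_⟩
  intro T hT hT₀ hTS hsum
  obtain ⟨U, hU, rfl⟩ := exists_eq_map_of_le_map f hT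
  rw [← map_multiset_sum, map_eq_zero_iff f hf] at hsum
  rcases hS.eq_zero_or_eq hU hsum with rfl | rfl
  · exact hT₀ (by simp)
  · exact hTS rfl

theorem exists_sublist_sum_eq_zero_of_card_lt {G : Type*} [AddCommGroup G] [Finite G] {l : List G}
    (hl : Nat.card G < l.length) :
    ∃ t : List G, t.Sublist l ∧ 0 < t.length ∧ t.length < l.length ∧ t.sum = 0 := by
  have := Fintype.ofFinite G
  rw [Nat.card_eq_fintype_card] at hl
  obtain ⟨i, j, hij, hsum⟩ := Fintype.exists_ne_map_eq_of_card_lt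
    (fun i : Fin l.length => (l.take i).sum) (by simpa using hl)
  wlog hlt : i < j generalizing i j
  · exact this j i hij.symm hsum.symm (lt_of_le_of_ne (not_lt.1 hlt) hij.symm)
  have hlt' : (i : ℕ) < j := hlt
  have hj := j.isLt
  have hlength : ((l.take j).drop i).length = j - i := by
    rw [List.length_drop, List.length_take, min_eq_left hj.le]
  refine ⟨(l.take j).drop i, (List.drop_sublist _ _).trans (List.take_sublist _ _), by omega,
    by omega, ?_⟩
  have hsplit := List.sum_take_add_sum_drop (l.take j) i
  rw [List.take_take, min_eq_left hlt'.le] at hsplit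
  exact add_eq_left.1 (hsplit.trans hsum.symm)

theorem IsMinimalZeroSum.card_le {G : Type*} [AddCommGroup G] [Finite G] {S : Multiset G}
    (hS : IsMinimalZeroSum S) : card S ≤ Nat.card G := by
  by_contra! hlt
  rw [← length_toList] at hlt
  obtain ⟨t, ht, hpos, hlt, hsum⟩ := exists_sublist_sum_eq_zero_of_card_lt hlt
  have htS : (t : Multiset G) ≤ S := by
    rw [← coe_toList S]
    exact coe_le.2 ht.subperm
  rcases hS.eq_zero_or_eq htS (by simpa using hsum) with h | h
  · simp_all
  · simp [← h] at hlt

theorem isMinimalZeroSum_map_natCast {n : ℕ} (hn : n ≠ 0) {N : Multiset ℕ}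
    (hpos : ∀ x ∈ N, 0 < x) (hsum : N.sum = n) :
    IsMinimalZeroSum (N.map (Nat.cast : ℕ → ZMod n)) := by
  have sum_natCast (U : Multiset ℕ) : (U.map (Nat.cast : ℕ → ZMod n)).sum = (U.sum : ZMod n) :=
    (map_multiset_sum (Nat.castAddMonoidHom (ZMod n)) U).symm
  have eq_zero_of_sum {U : Multiset ℕ} (hU : U ≤ N) (h : U.sum = 0) : U = 0 :=
    eq_zero_of_forall_notMem fun x hx =>
      (hpos x (mem_of_le hU hx)).ne' (Multiset.sum_eq_zero_iff.1 h x hx)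
  refine ⟨?_, by simp [sum_natCast, hsum], ?_⟩
  · rw [Ne, Multiset.map_eq_zero]
    rintro rfl
    exact hn (by simpa using hsum.symm)
  · intro T hT hT₀ hTN hTsum
    obtain ⟨U, hU, rfl⟩ := exists_eq_map_of_le_map _ hT
    obtain ⟨V, rfl⟩ := Multiset.le_iff_exists_add.1 hU
    rw [sum_natCast, ZMod.natCast_eq_zero_iff] at hTsum
    rw [sum_add] at hsum
    have hUpos : 0 < U.sum := Nat.pos_of_ne_zero fun h => hT₀ (by simp [eq_zero_of_sum hU h])
    have hUn := Nat.le_of_dvd hUpos hTsum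
    exact hTN (by simp [eq_zero_of_sum (le_add_left V U) (by omega)])

end MinimalZeroSum

section StrongDavenport

variable {G H : Type*} [AddCommGroup G] [AddCommGroup H] {k : ℕ}

theorem IsMinimalZeroSum.card_le_SDk [Finite G] {S : Multiset G} (hS : IsMinimalZeroSum S)
    (hk : cmul 1 S ≤ k) : card S ≤ SDk G k := by
  refine le_csSup ⟨Nat.card G, ?_⟩ ⟨S, hS, hk, rfl⟩
  rintro _ ⟨T, hT, -, rfl⟩
  exact hT.card_le

theorem exists_card_eq_SDk (G : Type*) [AddCommGroup G] [Finite G] (k : ℕ) :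
    ∃ S : Multiset G, IsMinimalZeroSum S ∧ cmul 1 S ≤ k ∧ card S = SDk G k := by
  have hzero : IsMinimalZeroSum ({0} : Multiset G) := by
    refine ⟨by simp, by simp, fun T hT hT₀ hT₁ => ?_⟩
    rcases Multiset.le_singleton.1 hT with rfl | rfl <;> contradiction
  refine Nat.sSup_mem
    (s := {m | ∃ S : Multiset G, IsMinimalZeroSum S ∧ cmul 1 S ≤ k ∧ card S = m})
    ⟨1, {0}, hzero, by simp [cmul_one_eq_zero_of_nodup], by simp⟩ ⟨Nat.card G, ?_⟩
  rintro _ ⟨T, hT, -, rfl⟩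
  exact hT.card_le

theorem SDk_le_DavenportD (G : Type*) [AddCommGroup G] [Finite G] (k : ℕ) :
    SDk G k ≤ DavenportD G := by
  obtain ⟨S, hS, -, hcard⟩ := exists_card_eq_SDk G k
  rw [← hcard]
  refine le_csSup ⟨Nat.card G, ?_⟩ ⟨S, hS, rfl⟩
  rintro _ ⟨T, hT, rfl⟩
  exact hT.card_le

theorem SDk_le_of_injective [Finite H] (f : G →+ H) (hf : Function.Injective f) (k : ℕ) :
    SDk G k ≤ SDk H k := by
  have := Finite.of_injective f hf
  obtain ⟨S, hS, hk, hcard⟩ := exists_card_eq_SDk G k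
  have hmap := (hS.map_of_injective f hf).card_le_SDk
    ((cmul_one_map_of_injOn hf.injOn).trans_le hk)
  rwa [card_map, hcard] at hmap

theorem min_le_SDk_zmod {n : ℕ} (hn : n ≠ 0) (k : ℕ) : min n (k + 1) ≤ SDk (ZMod n) k := by
  have : NeZero n := ⟨hn⟩
  obtain ⟨m, hm⟩ : ∃ m, min n (k + 1) = m + 1 := ⟨min n (k + 1) - 1, by omega⟩
  have hmin := isMinimalZeroSum_map_natCast hn (N := {n - m} + replicate m 1)
    (fun x hx => by
      rcases mem_add.1 hx with h | h
      · rw [mem_singleton.1 h]; omega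
      · rw [eq_of_mem_replicate h]; omega)
    (by rw [sum_add, sum_singleton, sum_replicate, smul_eq_mul, mul_one]; omega)
  have hcmul : cmul 1 (({n - m} + replicate m 1 : Multiset ℕ).map (Nat.cast : ℕ → ZMod n)) ≤ k := by
    rw [Multiset.map_add]
    refine (cmul_one_add_le _ _).trans ?_
    rw [map_singleton, cmul_one_eq_zero_of_nodup (nodup_singleton _), card_map, card_replicate]
    omega
  have hcard := hmin.card_le_SDk hcmul
  rw [card_map, card_add, card_singleton, card_replicate] at hcard
  omega

end StrongDavenport

section Replacement

variable {G K : Type*} [AddCommMonoid G] [AddCommMonoid K]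

/-- `W` is a replacement over `G × K` for the subsequence `M` of a sequence over `G`: exchanging
`M` for `W` preserves minimality, because any part of `W` whose sum lies in `G` has the same sum
as a part of `M`, a proper nonempty part of `W` giving a proper nonempty part of `M`. The terms of
`W` are distinct and lie outside `G`, so they do not contribute to the cumulated multiplicity. -/
structure IsReplacement (M : Multiset G) (W : Multiset (G × K)) : Prop where
  source_ne_zero : M ≠ 0
  ne_zero : W ≠ 0
  nodup : W.Nodup
  snd_ne_zero : ∀ w ∈ W, w.2 ≠ 0
  sum_eq : W.sum = (M.sum, 0)
  exists_sum_eq : ∀ T ≤ W, T ≠ 0 → T ≠ W → T.sum.2 = 0 → ∃ M' < M, M' ≠ 0 ∧ M'.sum = T.sum.1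

variable {M S : Multiset G} {W : Multiset (G × K)}

theorem IsReplacement.isMinimalZeroSum (hW : IsReplacement M W)
    (hS : IsMinimalZeroSum (M + S)) :
    IsMinimalZeroSum (S.map (AddMonoidHom.inl G K) + W) := by
  have hsum := hS.2.1
  refine ⟨by simp [hW.ne_zero], ?_, fun T hT hT₀ hTne hTsum => ?_⟩
  · rw [sum_add, ← map_multiset_sum, hW.sum_eq]
    rw [sum_add, add_comm] at hsum
    simp [hsum]
  obtain ⟨_, hUmap, V, hV, rfl⟩ := exists_eq_add_of_le_add hT
  obtain ⟨U, hU, rfl⟩ := exists_eq_map_of_le_map _ hUmap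
  rw [sum_add, ← map_multiset_sum] at hTsum
  have hfst : U.sum + V.sum.1 = 0 := by simpa using congrArg Prod.fst hTsum
  have hsnd : V.sum.2 = 0 := by simpa using congrArg Prod.snd hTsum
  by_cases hV₀ : V = 0
  · subst hV₀
    rcases hS.eq_zero_or_eq (hU.trans (le_add_left S M)) (by simpa using hfst) with rfl | rfl
    · simp at hT₀
    · exact hW.source_ne_zero (add_eq_right.1 (hU.antisymm (le_add_left S M)))
  by_cases hVW : V = W
  · subst hVW
    rw [hW.sum_eq] at hfst
    rcases hS.eq_zero_or_eq (add_le_add_right hU M)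
      (by rw [sum_add, add_comm, hfst]) with h | h
    · exact hW.source_ne_zero (add_eq_zero.1 h).1
    · exact hTne (by rw [add_left_cancel h])
  · obtain ⟨M', hM', hM'₀, hM'sum⟩ := hW.exists_sum_eq V hV hV₀ hVW hsnd
    rcases hS.eq_zero_or_eq (add_le_add hM'.le hU)
      (by rw [sum_add, hM'sum, add_comm, hfst]) with h | h
    · exact hM'₀ (add_eq_zero.1 h).1
    · exact (add_lt_add_of_lt_of_le hM' hU).ne h

theorem IsReplacement.cmul_one_eq (hW : IsReplacement M W) :
    cmul 1 (S.map (AddMonoidHom.inl G K) + W) = cmul 1 S := by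
  have hdisj : Disjoint (S.map (AddMonoidHom.inl G K)) W := by
    rw [Multiset.disjoint_left]
    intro w hw hwW
    obtain ⟨g, -, rfl⟩ := mem_map.1 hw
    exact hW.snd_ne_zero _ hwW (by simp)
  rw [cmul_one_add_of_disjoint hdisj, cmul_one_eq_zero_of_nodup hW.nodup,
    cmul_one_map_of_injOn (f := AddMonoidHom.inl G K) (Prod.mk_left_injective 0).injOn, add_zero]

theorem IsReplacement.card_add_card_le_SDk {G K : Type*} [AddCommGroup G] [AddCommGroup K]
    [Finite G] [Finite K] {M S : Multiset G} {W : Multiset (G × K)} {k : ℕ}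
    (hW : IsReplacement M W) (hS : IsMinimalZeroSum (M + S)) (hk : cmul 1 S ≤ k) :
    card S + card W ≤ SDk (G × K) k := by
  simpa using (hW.isMinimalZeroSum hS).card_le_SDk (hW.cmul_one_eq.trans_le hk)

end Replacement

section SumOfDistinct

/-- `g` is a sum of `m` pairwise distinct elements of `G`, one of which may be `0`. -/
def IsSumOfDistinct {G : Type*} [AddCommMonoid G] (m : ℕ) (g : G) : Prop :=
  ∃ A : Multiset G, A.Nodup ∧ card A = m ∧ A.sum = g

theorem IsSumOfDistinct.map_of_injective {G H : Type*} [AddCommMonoid G] [AddCommMonoid H] {m : ℕ}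
    {g : G} (hg : IsSumOfDistinct m g) (f : G →+ H) (hf : Function.Injective f) :
    IsSumOfDistinct m (f g) := by
  obtain ⟨A, hA, hcard, rfl⟩ := hg
  exact ⟨A.map f, hA.map hf, by simpa using hcard, (map_multiset_sum f A).symm⟩

variable {G H : Type*} [AddCommGroup G] [AddCommGroup H]

theorem isSumOfDistinct_sum_univ_sub_sum [Fintype G] (B : Finset G) {m : ℕ}
    (hm : m + B.card = Fintype.card G) : IsSumOfDistinct m (∑ x, x - ∑ x ∈ B, x) := by
  classical
  refine ⟨Bᶜ.val, Bᶜ.nodup, ?_, ?_⟩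
  · rw [Finset.card_val, Finset.card_compl]
    omega
  · rw [← Finset.sum_compl_add_sum B, add_sub_cancel_right, Finset.sum_val]
    rfl

theorem isSumOfDistinct_of_add_one_eq_card [Finite G] {m : ℕ} (hm : m + 1 = Nat.card G) (g : G) :
    IsSumOfDistinct m g := by
  classical
  have := Fintype.ofFinite G
  rw [Nat.card_eq_fintype_card] at hm
  simpa using isSumOfDistinct_sum_univ_sub_sum {∑ x, x - g} (by simpa using hm)

theorem exists_ne_and_add_eq {e : G} (he : e ≠ -e) (g : G) : ∃ x y : G, x ≠ y ∧ x + y = g := by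
  by_cases hg : g = 0
  · exact ⟨e, -e, he, by simp [hg]⟩
  · exact ⟨0, g, Ne.symm hg, zero_add g⟩

theorem isSumOfDistinct_of_add_two_eq_card [Finite G] {e : G} (he : e ≠ -e) {m : ℕ}
    (hm : m + 2 = Nat.card G) (g : G) : IsSumOfDistinct m g := by
  classical
  have := Fintype.ofFinite G
  rw [Nat.card_eq_fintype_card] at hm
  obtain ⟨x, y, hxy, hsum⟩ := exists_ne_and_add_eq he (∑ x, x - g)
  have hg := isSumOfDistinct_sum_univ_sub_sum {x, y} (by rwa [Finset.card_pair hxy])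
  rwa [Finset.sum_pair hxy, hsum, sub_sub_cancel] at hg

theorem isSumOfDistinct_card_prod [Finite G] {e : G} (he : e ≠ -e) {e' : H} (he' : e' ≠ -e')
    (g : G × H) : IsSumOfDistinct (Nat.card G) g := by
  obtain ⟨a, b⟩ := g
  have hinl : Function.Injective (AddMonoidHom.inl G H) := Prod.mk_left_injective 0
  have he₀ : e ≠ 0 := by rintro rfl; simp at he
  have he'₀ : e' ≠ 0 := by rintro rfl; simp at he'
  have : Nontrivial G := ⟨e, 0, he₀⟩
  have hcard : 1 < Nat.card G := Finite.one_lt_card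
  by_cases hb : b = 0
  · subst hb
    obtain ⟨A, hA, hAcard, rfl⟩ :=
      isSumOfDistinct_of_add_two_eq_card he (Nat.sub_add_cancel hcard) a
    refine ⟨(0, e') ::ₘ (0, -e') ::ₘ A.map (AddMonoidHom.inl G H), ?_, ?_, ?_⟩
    · simp [hA.map hinl, he', he'₀, he'₀.symm]
    · simp only [card_cons, card_map]
      omega
    · simp [← map_multiset_sum]
  · obtain ⟨A, hA, hAcard, rfl⟩ :=
      isSumOfDistinct_of_add_one_eq_card (Nat.sub_add_cancel hcard.le) a
    refine ⟨(0, b) ::ₘ A.map (AddMonoidHom.inl G H), ?_, ?_, ?_⟩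
    · simp [hA.map hinl, Ne.symm hb]
    · simp only [card_cons, card_map]
      omega
    · simp [← map_multiset_sum]

end SumOfDistinct

section OneNewCoordinate

variable {n : ℕ}

theorem isReplacement_singleton {G : Type*} [AddCommMonoid G] (hn : 1 < n) {A : Multiset G}
    (hA : A.Nodup) (hcard : card A = n) :
    IsReplacement {A.sum} (A.map fun x => (x, (1 : ZMod n))) where
  source_ne_zero := singleton_ne_zero _
  ne_zero := by
    rw [Ne, Multiset.map_eq_zero, ← card_eq_zero]
    omega
  nodup := hA.map (Prod.mk_left_injective 1)
  snd_ne_zero := by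
    have : Fact (1 < n) := ⟨hn⟩
    intro w hw
    obtain ⟨x, -, rfl⟩ := mem_map.1 hw
    exact one_ne_zero
  sum_eq := by simp [sum_map_prodMk, hcard]
  exists_sum_eq := by
    intro T hT hT₀ hTne hsum
    obtain ⟨U, hU, rfl⟩ := exists_eq_map_of_le_map _ hT
    have hdvd : n ∣ card U := by
      rw [← ZMod.natCast_eq_zero_iff]
      simpa [sum_map_prodMk] using hsum
    have hpos : 0 < card U := card_pos.2 fun h => hT₀ (by simp [h])
    have hUA : U = A := eq_of_le_of_card_le hU (hcard.trans_le (Nat.le_of_dvd hpos hdvd))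
    exact absurd (by rw [hUA]) hTne

theorem SDk_succ_add_le_SDk_prod_zmod {G : Type*} [AddCommGroup G] [Finite G] (hn : 1 < n)
    (hG : ∀ g : G, IsSumOfDistinct n g) (k : ℕ) :
    SDk G (k + 1) + (n - 1) ≤ SDk (G × ZMod n) k := by
  have : NeZero n := ⟨by omega⟩
  obtain ⟨S, hS, hk, hcard⟩ := exists_card_eq_SDk G (k + 1)
  obtain ⟨g, S', rfl, hk'⟩ := exists_eq_cons_of_cmul_one_le hS.1 hk
  obtain ⟨A, hA, hAcard, rfl⟩ := hG g
  have hle := (isReplacement_singleton hn hA hAcard).card_add_card_le_SDk hS hk'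
  rw [card_map, hAcard] at hle
  rw [card_cons] at hcard
  omega

end OneNewCoordinate

section CyclicBasis

variable {R : Type*} [Ring R] [Nontrivial R] {s : ℕ}

theorem single_ne_single_add_single (i j : Fin (s + 2)) :
    (Pi.single i 1 : Fin (s + 2) → R) ≠ Pi.single j 1 + Pi.single (j + 1) 1 := by
  intro h
  obtain rfl : j = i := by
    by_contra hji
    simpa [hji] using congrFun h j
  simpa using congrFun h (j + 1)

theorem single_ne_single_sub_single (hneg : (-1 : R) ≠ 1) (i j : Fin (s + 2)) :
    (Pi.single i 1 : Fin (s + 2) → R) ≠ Pi.single j 1 - Pi.single (j + 1) 1 := by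
  intro h
  have hj := congrFun h (j + 1)
  rcases eq_or_ne i (j + 1) with rfl | hi
  · simp [hneg.symm] at hj
  · simp [hi.symm, eq_comm (a := (0 : R))] at hj

theorem single_add_single_ne_single_sub_single (hneg : (-1 : R) ≠ 1) (i j : Fin (s + 2)) :
    (Pi.single i 1 + Pi.single (i + 1) 1 : Fin (s + 2) → R) ≠
      Pi.single j 1 - Pi.single (j + 1) 1 := by
  intro h
  have hj := congrFun h (j + 1)
  rcases eq_or_ne i j with rfl | hij
  · simp [hneg.symm] at hj
  rcases eq_or_ne i (j + 1) with rfl | hi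
  · simp [hneg.symm] at hj
  · simp [hi.symm, hij.symm, eq_comm (a := (0 : R))] at hj

theorem single_sub_single_injective (hneg : (-1 : R) ≠ 1) :
    Function.Injective fun i : Fin (s + 2) =>
      (Pi.single i 1 - Pi.single (i + 1) 1 : Fin (s + 2) → R) := by
  intro i j h
  by_contra hij
  have hi := congrFun h i
  rcases eq_or_ne i (j + 1) with rfl | hi'
  · simp [hneg.symm] at hi
  · simp [hij, hi'] at hi

end CyclicBasis

section CyclicReplacement

theorem forall_of_forall_imp_add_one {s : ℕ} [NeZero s] {p : Fin s → Prop}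
    (hp : ∀ i, p i → p (i + 1)) {i : Fin s} (hi : p i) (j : Fin s) : p j := by
  have hadd (m : ℕ) : p (i + Fin.ofNat s m) := by
    induction m with
    | zero => simpa using hi
    | succ m ih =>
      have hsucc : Fin.ofNat s (m + 1) = Fin.ofNat s m + 1 := by
        ext
        simp [Fin.val_add]
      simpa only [hsucc, add_assoc] using hp _ ih
  simpa using hadd (j - i).val

theorem eq_zero_or_eq_of_dvd_of_lt {n z : ℤ} (h : n ∣ z) (hlow : -n < z) (hupp : z < 2 * n) :
    z = 0 ∨ z = n := by
  obtain ⟨q, rfl⟩ := h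
  have hn : 0 < n := by omega
  have hq₀ : -1 < q := lt_of_mul_lt_mul_left (by linarith : n * -1 < n * q) hn.le
  have hq₂ : q < 2 := lt_of_mul_lt_mul_left (by linarith : n * q < n * 2) hn.le
  obtain rfl | rfl : q = 0 ∨ q = 1 := by omega
  · simp
  · simp

theorem iff_imp_eq_ite_of_dvd {n u : ℕ} {p q p' q' : Prop} [Decidable p] [Decidable q]
    [Decidable p'] [Decidable q'] (hu : u + 2 ≤ n)
    (h : (n : ℤ) ∣ u + (if p' then 1 else 0) + (if q' then 1 else 0)
      + (if p then 1 else 0) - (if q then 1 else 0)) :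
    ((q ↔ p) → (q' ↔ p') ∧ u = if p' then n - 2 else 0) ∧
      (¬(q ↔ p) → ¬(q' ↔ p') → u = if p then n - 2 else 0) := by
  have hsol := eq_zero_or_eq_of_dvd_of_lt h (by split_ifs <;> omega) (by split_ifs <;> omega)
  by_cases p <;> by_cases q <;> by_cases p' <;> by_cases q' <;> simp_all <;> omega

-- The hypothesis says that the selection `(U, P, Q)` of `cyclicSeq` with `u i = card (U i)` has sum
-- zero in `C_n^s`. Whether `i ∈ Q ↔ i ∈ P` propagates from `i` to `i + 1`, hence all around.
theorem eq_or_eq_compl_of_dvd {n s : ℕ} [NeZero s] {u : Fin s → ℕ} {P Q : Finset (Fin s)}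
    (hu : ∀ i, u i + 2 ≤ n)
    (h : ∀ i, (n : ℤ) ∣ u (i + 1) + (if i + 1 ∈ P then 1 else 0) + (if i + 1 ∈ Q then 1 else 0)
      + (if i ∈ P then 1 else 0) - (if i ∈ Q then 1 else 0)) :
    (Q = P ∧ ∀ i, u i = if i ∈ P then n - 2 else 0) ∨
      (Q = Pᶜ ∧ ∀ i, u (i + 1) = if i ∈ P then n - 2 else 0) := by
  have hsol (i : Fin s) := iff_imp_eq_ite_of_dvd (hu (i + 1)) (h i)
  by_cases hPQ : ∃ i, i ∈ Q ↔ i ∈ P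
  · obtain ⟨i₀, hi₀⟩ := hPQ
    have hmem := forall_of_forall_imp_add_one (fun i hi => ((hsol i).1 hi).1) hi₀
    refine .inl ⟨Finset.ext hmem, fun i => ?_⟩
    simpa using ((hsol (i - 1)).1 (hmem _)).2
  · rw [not_exists] at hPQ
    refine .inr ⟨Finset.ext fun i => ?_, fun i => (hsol i).2 (hPQ i) (hPQ (i + 1))⟩
    rw [Finset.mem_compl]
    exact iff_not_comm.1 (not_iff.1 (hPQ i)).symm

theorem eq_ite_of_card_eq_ite {α : Type*} {p : Prop} [Decidable p] {U A : Multiset α} (hU : U ≤ A)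
    {m : ℕ} (hA : card A = m) (h : card U = if p then m else 0) : U = if p then A else 0 := by
  split_ifs at h ⊢
  · exact eq_of_le_of_card_le hU (hA.trans h.symm).le
  · exact card_eq_zero.1 h

variable {G : Type*} {n s : ℕ}

/-- The sequence over `G × C_n^s` with terms `(x, e_i)` for `x` in `U i`, `(b i, e_i + e_{i+1})` for
`i ∈ P` and `(c i, e_i - e_{i+1})` for `i ∈ Q`, where `e_i` is the standard basis of `C_n^s` and
indices are cyclic. Selecting `U`, `P`, `Q` is selecting a subsequence of the sequence with
`P = Q = univ`. -/
noncomputable def cyclicSeq [NeZero s] (b c : Fin s → G) (U : Fin s → Multiset G)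
    (P Q : Finset (Fin s)) : Multiset (G × (Fin s → ZMod n)) :=
  ∑ i, (U i).map (fun x => (x, Pi.single i 1)) +
    P.val.map (fun i => (b i, Pi.single i 1 + Pi.single (i + 1) 1)) +
    Q.val.map (fun i => (c i, Pi.single i 1 - Pi.single (i + 1) 1))

theorem mem_cyclicSeq_univ [NeZero s] {b c : Fin s → G} {A : Fin s → Multiset G}
    {w : G × (Fin s → ZMod n)} :
    w ∈ cyclicSeq b c A .univ .univ ↔ (∃ i, ∃ x ∈ A i, (x, Pi.single i 1) = w) ∨
      (∃ i, (b i, Pi.single i 1 + Pi.single (i + 1) 1) = w) ∨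
      ∃ i, (c i, Pi.single i 1 - Pi.single (i + 1) 1) = w := by
  simp [cyclicSeq, mem_sum, or_assoc]

theorem exists_eq_cyclicSeq_of_le [NeZero s] {b c : Fin s → G} {A : Fin s → Multiset G}
    {T : Multiset (G × (Fin s → ZMod n))} (hT : T ≤ cyclicSeq b c A .univ .univ) :
    ∃ U ≤ A, ∃ P Q, T = cyclicSeq b c U P Q := by
  obtain ⟨_, hUP, _, hQ, rfl⟩ := exists_eq_add_of_le_add hT
  obtain ⟨_, hU, _, hP, rfl⟩ := exists_eq_add_of_le_add hUP
  obtain ⟨f, hf, rfl⟩ := exists_eq_sum_of_le_sum _ hU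
  obtain ⟨P, rfl⟩ := exists_finset_of_le_univ_map _ hP
  obtain ⟨Q, rfl⟩ := exists_finset_of_le_univ_map _ hQ
  choose U hUA hfU using fun i => exists_eq_map_of_le_map _ (hf i)
  exact ⟨U, hUA, P, Q, by simp [cyclicSeq, hfU]⟩

theorem card_cyclicSeq [NeZero s] (b c : Fin s → G) (U : Fin s → Multiset G)
    (P Q : Finset (Fin s)) :
    card (cyclicSeq (n := n) b c U P Q) = ∑ i, card (U i) + P.card + Q.card := by
  simp [cyclicSeq]

theorem nodup_cyclicSeq (hn : 3 ≤ n) {b c : Fin (s + 2) → G} {A : Fin (s + 2) → Multiset G}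
    (hA : ∀ i, (A i).Nodup)
    (hb : Function.Injective fun i =>
      (b i, (Pi.single i 1 + Pi.single (i + 1) 1 : Fin (s + 2) → ZMod n))) :
    (cyclicSeq (n := n) b c A .univ .univ).Nodup := by
  have : Fact (2 < n) := ⟨by omega⟩
  have : Fact (1 < n) := ⟨by omega⟩
  have hneg : (-1 : ZMod n) ≠ 1 := ZMod.neg_one_ne_one
  rw [cyclicSeq, nodup_add, nodup_add]
  refine ⟨⟨?_, Finset.univ.nodup.map hb, ?_⟩, Finset.univ.nodup.map ?_, ?_⟩
  · change (Finset.univ.val.bind fun i => (A i).map fun x => (x, Pi.single i 1)).Nodup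
    refine nodup_bind.2 ⟨fun i _ => (hA i).map (Prod.mk_left_injective _), ?_⟩
    refine Nodup.pairwise (fun i _ j _ hij => ?_) Finset.univ.nodup
    refine disjoint_map_map.2 fun x _ y _ h => ?_
    simpa [hij] using congrFun (congrArg Prod.snd h) i
  · refine Multiset.disjoint_right.2 fun {w} hw hw' => ?_
    obtain ⟨j, -, rfl⟩ := mem_map.1 hw
    obtain ⟨i, -, hi⟩ := mem_sum.1 hw'
    obtain ⟨x, -, hx⟩ := mem_map.1 hi
    exact single_ne_single_add_single i j (congrArg Prod.snd hx)
  · intro i j hij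
    exact single_sub_single_injective hneg (congrArg Prod.snd hij)
  · refine Multiset.disjoint_right.2 fun {w} hw hw' => ?_
    obtain ⟨j, -, rfl⟩ := mem_map.1 hw
    rcases mem_add.1 hw' with hsum | hmap
    · obtain ⟨i, -, hi⟩ := mem_sum.1 hsum
      obtain ⟨x, -, hx⟩ := mem_map.1 hi
      exact single_ne_single_sub_single hneg i j (congrArg Prod.snd hx)
    · obtain ⟨i, -, hi⟩ := mem_map.1 hmap
      exact single_add_single_ne_single_sub_single hneg i j (congrArg Prod.snd hi)

theorem snd_ne_zero_of_mem_cyclicSeq (hn : 1 < n) {b c : Fin (s + 2) → G}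
    {A : Fin (s + 2) → Multiset G} {w : G × (Fin (s + 2) → ZMod n)}
    (hw : w ∈ cyclicSeq b c A .univ .univ) : w.2 ≠ 0 := by
  have : Fact (1 < n) := ⟨hn⟩
  intro h
  rcases mem_cyclicSeq_univ.1 hw with ⟨i, x, -, rfl⟩ | ⟨i, rfl⟩ | ⟨i, rfl⟩ <;>
    simpa using congrFun h i

section AddCommMonoid

variable [AddCommMonoid G]

theorem sum_cyclicSeq_fst [NeZero s] (b c : Fin s → G) (U : Fin s → Multiset G)
    (P Q : Finset (Fin s)) :
    (cyclicSeq (n := n) b c U P Q).sum.1 = ∑ i, (U i).sum + ∑ i ∈ P, b i + ∑ i ∈ Q, c i := by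
  simp [cyclicSeq, sum_map_prodMk, Multiset.sum_sum, Prod.fst_sum]

theorem sum_cyclicSeq_snd_add_one [NeZero s] (b c : Fin s → G) (U : Fin s → Multiset G)
    (P Q : Finset (Fin s)) (i : Fin s) :
    (cyclicSeq (n := n) b c U P Q).sum.2 (i + 1) =
      ((card (U (i + 1)) + (if i + 1 ∈ P then 1 else 0) + (if i + 1 ∈ Q then 1 else 0)
        + (if i ∈ P then 1 else 0) - (if i ∈ Q then 1 else 0) : ℤ) : ZMod n) := by
  simp only [cyclicSeq, sum_add, Multiset.sum_sum, sum_map_prodMk, nsmul_eq_mul,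
    Finset.sum_map_val, Prod.snd_add, Prod.snd_sum, Finset.sum_add_distrib,
    Finset.sum_sub_distrib, Pi.add_apply, Pi.sub_apply, Pi.mul_apply, Pi.natCast_apply,
    Finset.sum_apply, Pi.single_apply, mul_ite, mul_one, mul_zero, Finset.sum_ite_eq,
    Finset.mem_univ, if_true, add_left_inj]
  push_cast
  ring

theorem sum_cyclicSeq_univ [NeZero s] {b c g : Fin s → G} {A : Fin s → Multiset G}
    (hA : ∀ i, card (A i) + 2 = n) (hg : ∀ i, (A i).sum + b i + c i = g i) :
    (cyclicSeq (n := n) b c A .univ .univ).sum = ((Finset.univ.val.map g).sum, 0) := by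
  refine Prod.ext ?_ (funext fun i => ?_)
  · rw [sum_cyclicSeq_fst, Finset.sum_map_val]
    simp only [← hg, Finset.sum_add_distrib]
  · obtain ⟨j, rfl⟩ : ∃ j, i = j + 1 := ⟨i - 1, by simp⟩
    have hcast := congrArg (Nat.cast : ℕ → ZMod n) (hA (j + 1))
    push_cast [ZMod.natCast_self] at hcast
    simp only [sum_cyclicSeq_snd_add_one, Finset.mem_univ, if_true, Pi.zero_apply]
    push_cast
    linear_combination hcast

theorem exists_cyclicSeq_eq [NeZero s] {b c : Fin s → G} {A : Fin s → Multiset G}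
    (hA : ∀ i, card (A i) + 2 = n) {T : Multiset (G × (Fin s → ZMod n))}
    (hT : T ≤ cyclicSeq b c A .univ .univ) (hsum : T.sum.2 = 0) :
    ∃ P, T = cyclicSeq b c (fun i => if i ∈ P then A i else 0) P P ∨
      T = cyclicSeq b c (fun i => if i - 1 ∈ P then A i else 0) P Pᶜ := by
  obtain ⟨U, hU, P, Q, rfl⟩ := exists_eq_cyclicSeq_of_le hT
  have hAcard (i : Fin s) : card (A i) = n - 2 := by have := hA i; omega
  have hdvd (i : Fin s) := congrFun hsum (i + 1)
  simp only [sum_cyclicSeq_snd_add_one, Pi.zero_apply, ZMod.intCast_zmod_eq_zero_iff_dvd] at hdvd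
  refine ⟨P, ?_⟩
  rcases eq_or_eq_compl_of_dvd
    (fun i => (Nat.add_le_add_right (card_le_card (hU i)) 2).trans (hA i).le) hdvd with
    ⟨rfl, hu⟩ | ⟨rfl, hu⟩
  · refine .inl ?_
    congr
    exact funext fun i => eq_ite_of_card_eq_ite (hU i) (hAcard i) (hu i)
  · refine .inr ?_
    congr
    exact funext fun i => eq_ite_of_card_eq_ite (hU i) (hAcard i) (by simpa using hu (i - 1))

theorem isReplacement_cyclicSeq (hn : 3 ≤ n) {b c g : Fin (s + 2) → G}
    {A : Fin (s + 2) → Multiset G} (hA : ∀ i, (A i).Nodup) (hAcard : ∀ i, card (A i) + 2 = n)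
    (hb : Function.Injective fun i =>
      (b i, (Pi.single i 1 + Pi.single (i + 1) 1 : Fin (s + 2) → ZMod n)))
    (hg : ∀ i, (A i).sum + b i + c i = g i)
    (hcompl : ∀ P : Finset (Fin (s + 2)), ∃ J : Finset (Fin (s + 2)), J ≠ ∅ ∧ J ≠ .univ ∧
      ∑ i ∈ P, ((A (i + 1)).sum + b i) + ∑ i ∈ Pᶜ, c i = ∑ i ∈ J, g i) :
    IsReplacement (Finset.univ.val.map g) (cyclicSeq (n := n) b c A .univ .univ) where
  source_ne_zero := by simp [← card_eq_zero]
  ne_zero := by simp [← card_eq_zero, card_cyclicSeq]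
  nodup := nodup_cyclicSeq hn hA hb
  snd_ne_zero _ := snd_ne_zero_of_mem_cyclicSeq (by omega)
  sum_eq := sum_cyclicSeq_univ hAcard hg
  exists_sum_eq := by
    intro T hT hT₀ hTne hsum
    obtain ⟨J, hJ₀, hJ, hJsum⟩ : ∃ J : Finset (Fin (s + 2)), J ≠ ∅ ∧ J ≠ .univ ∧
        ∑ i ∈ J, g i = T.sum.1 := by
      obtain ⟨P, rfl | rfl⟩ := exists_cyclicSeq_eq hAcard hT hsum
      · refine ⟨P, ?_, ?_, ?_⟩
        · rintro rfl
          simp [cyclicSeq] at hT₀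
        · rintro rfl
          simp at hTne
        · simp [sum_cyclicSeq_fst, ← hg, Finset.sum_add_distrib, apply_ite Multiset.sum,
            Finset.sum_ite_mem]
      · obtain ⟨J, hJ₀, hJ, hJsum⟩ := hcompl P
        refine ⟨J, hJ₀, hJ, ?_⟩
        rw [sum_cyclicSeq_fst, ← hJsum, ← Equiv.sum_comp (Equiv.addRight 1)]
        simp [Finset.sum_add_distrib, apply_ite Multiset.sum, Finset.sum_ite_mem]
    refine ⟨J.val.map g, map_lt_map (Finset.val_lt_iff.2 (Finset.ssubset_univ_iff.2 hJ)),
      by simpa using hJ₀, hJsum⟩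

end AddCommMonoid

variable [AddCommGroup G]

theorem exists_isReplacement_pair (hn : 3 ≤ n) (hG : ∀ g : G, IsSumOfDistinct (n - 2) g)
    {g₀ g₁ : G} (hne : g₀ ≠ g₁) :
    ∃ W : Multiset (G × (Fin 2 → ZMod n)), IsReplacement {g₀, g₁} W ∧ card W = 2 * n := by
  choose A hA hAcard hAsum using hG
  have hAcard' (g : G) : card (A g) + 2 = n := by rw [hAcard]; omega
  refine ⟨cyclicSeq ![g₀ - g₁, 0] ![0, g₁] (fun i => A (![g₁, 0] i)) .univ .univ, ?_, ?_⟩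
  · have hg : ({g₀, g₁} : Multiset G) = Finset.univ.val.map ![g₀, g₁] := rfl
    rw [hg]
    refine isReplacement_cyclicSeq (s := 0) hn (fun _ => hA _) (fun _ => hAcard' _) ?_ ?_ ?_
    · intro i j hij
      have hfst := congrArg Prod.fst hij
      fin_cases i <;> fin_cases j <;>
        simp [sub_ne_zero.2 hne, (sub_ne_zero.2 hne).symm] at hfst ⊢
    · simp [Fin.forall_fin_two, hAsum]
    · intro P
      refine ⟨if 0 ∈ P then {0} else {1}, ?_, ?_, ?_⟩
      · split_ifs <;> simp
      · split_ifs <;> decide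
      · rw [← Fintype.sum_ite_mem P, ← Fintype.sum_ite_mem Pᶜ, Fin.sum_univ_two, Fin.sum_univ_two]
        by_cases h₀ : 0 ∈ P <;> by_cases h₁ : 1 ∈ P <;> simp [h₀, h₁, hAsum]
  · simp only [card_cyclicSeq, hAcard, Finset.sum_const, Finset.card_univ, Fintype.card_fin,
      smul_eq_mul]
    omega

theorem exists_isReplacement_triple (hn : 3 ≤ n) (hG : ∀ g : G, IsSumOfDistinct (n - 2) g)
    (g₀ g₁ g₂ : G) :
    ∃ W : Multiset (G × (Fin 3 → ZMod n)), IsReplacement {g₀, g₁, g₂} W ∧ card W = 3 * n := by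
  have : Fact (1 < n) := ⟨by omega⟩
  choose A hA hAcard hAsum using hG
  have hAcard' (g : G) : card (A g) + 2 = n := by rw [hAcard]; omega
  refine ⟨cyclicSeq 0 ![0, 0, g₂] (fun i => A (![g₀, g₁, 0] i)) .univ .univ, ?_, ?_⟩
  · have hg : ({g₀, g₁, g₂} : Multiset G) = Finset.univ.val.map ![g₀, g₁, g₂] := rfl
    rw [hg]
    refine isReplacement_cyclicSeq (s := 1) hn (fun _ => hA _) (fun _ => hAcard' _) ?_ ?_ ?_
    · intro i j hij
      have hsnd := congrFun (congrArg Prod.snd hij)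
      fin_cases i <;> fin_cases j <;> simp [Fin.forall_fin_succ] at hsnd ⊢
    · simp [Fin.forall_fin_succ, hAsum]
    · intro P
      refine ⟨(if 2 ∈ P then {0} else {2}) ∪ if 0 ∈ P then {1} else ∅, ?_, ?_, ?_⟩
      · split_ifs <;> simp
      · split_ifs <;> decide
      · rw [← Fintype.sum_ite_mem P, ← Fintype.sum_ite_mem Pᶜ, Fin.sum_univ_three,
          Fin.sum_univ_three]
        by_cases h₀ : 0 ∈ P <;> by_cases h₁ : 1 ∈ P <;> by_cases h₂ : 2 ∈ P <;>
          simp [h₀, h₁, h₂, hAsum, add_comm]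
  · simp only [card_cyclicSeq, hAcard, Finset.sum_const, Finset.card_univ, Fintype.card_fin,
      smul_eq_mul]
    omega

end CyclicReplacement

section Homocyclic

variable {n : ℕ}

theorem SDk_prod_pi_le (G : Type*) [AddCommGroup G] [Finite G] (j k : ℕ) :
    SDk (G × (Fin j → G)) k ≤ SDk (Fin (j + 1) → G) k :=
  SDk_le_of_injective ((Fin.consLinearEquiv ℤ fun _ => G).toAddEquiv.toAddMonoidHom)
    (Fin.consLinearEquiv ℤ fun _ => G).injective k

theorem one_ne_neg_one_zmod (hn : 3 ≤ n) : (1 : ZMod n) ≠ -1 := by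
  have : Fact (2 < n) := ⟨hn⟩
  exact ZMod.neg_one_ne_one.symm

theorem isSumOfDistinct_sub_two_zmod (hn : 3 ≤ n) (g : ZMod n) : IsSumOfDistinct (n - 2) g := by
  have : NeZero n := ⟨by omega⟩
  exact isSumOfDistinct_of_add_two_eq_card (one_ne_neg_one_zmod hn)
    (by rw [Nat.card_zmod]; omega) g

theorem isSumOfDistinct_pi_zmod (hn : 3 ≤ n) {j : ℕ} (g : Fin (j + 2) → ZMod n) :
    IsSumOfDistinct n g := by
  have : NeZero n := ⟨by omega⟩
  have hone : (1 : Fin (j + 1) → ZMod n) ≠ -1 :=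
    fun h => one_ne_neg_one_zmod hn (congrFun h 0)
  have hpair := isSumOfDistinct_card_prod (one_ne_neg_one_zmod hn) hone
  rw [Nat.card_zmod] at hpair
  let cons := Fin.consLinearEquiv ℤ fun _ : Fin (j + 2) => ZMod n
  rw [← cons.apply_symm_apply g]
  exact (hpair _).map_of_injective cons.toAddEquiv.toAddMonoidHom cons.injective

theorem SDk_pi_zmod_succ_add_le (hn : 3 ≤ n) {r : ℕ} (hr : 2 ≤ r) (k : ℕ) :
    SDk (Fin r → ZMod n) (k + 1) + (n - 1) ≤ SDk (Fin (r + 1) → ZMod n) k := by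
  have : NeZero n := ⟨by omega⟩
  obtain ⟨j, rfl⟩ := Nat.exists_eq_add_of_le' hr
  let swap : (Fin (j + 2) → ZMod n) × ZMod n ≃+ ZMod n × (Fin (j + 2) → ZMod n) :=
    AddEquiv.prodComm
  calc SDk (Fin (j + 2) → ZMod n) (k + 1) + (n - 1)
      ≤ SDk ((Fin (j + 2) → ZMod n) × ZMod n) k :=
        SDk_succ_add_le_SDk_prod_zmod (by omega) (isSumOfDistinct_pi_zmod hn) k
    _ ≤ SDk (ZMod n × (Fin (j + 2) → ZMod n)) k :=
        SDk_le_of_injective swap.toAddMonoidHom swap.injective k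
    _ ≤ SDk (Fin (j + 2 + 1) → ZMod n) k := SDk_prod_pi_le (ZMod n) (j + 2) k

theorem SDk_zmod_add_le_SDk_pi_four (hn : 3 ≤ n) (k : ℕ) :
    SDk (ZMod n) (k + 3) + 3 * (n - 1) ≤ SDk (Fin 4 → ZMod n) k := by
  have : NeZero n := ⟨by omega⟩
  obtain ⟨S, hS, hk, hcard⟩ := exists_card_eq_SDk (ZMod n) (k + 3)
  have hlength := min_le_SDk_zmod (n := n) (by omega) (k + 3)
  obtain ⟨M, S', rfl, hM, hk'⟩ := exists_eq_add_of_cmul_one_le (m := 3) (by omega) hk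
  obtain ⟨g₀, g₁, g₂, rfl⟩ := card_eq_three.1 hM
  obtain ⟨W, hW, hWcard⟩ :=
    exists_isReplacement_triple hn (isSumOfDistinct_sub_two_zmod hn) g₀ g₁ g₂
  have hle : card S' + card W ≤ SDk (Fin 4 → ZMod n) k :=
    (hW.card_add_card_le_SDk hS hk').trans (SDk_prod_pi_le (ZMod n) 3 k)
  rw [card_add] at hcard
  omega

theorem SDk_zmod_add_le_SDk_pi (hn : 3 ≤ n) {r : ℕ} (hr : 4 ≤ r) (k : ℕ) :
    SDk (ZMod n) (k + r - 1) + (r - 1) * (n - 1) ≤ SDk (Fin r → ZMod n) k := by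
  induction r, hr using Nat.le_induction generalizing k with
  | base => exact SDk_zmod_add_le_SDk_pi_four hn k
  | succ r hr ih =>
    obtain ⟨j, rfl⟩ := Nat.exists_eq_add_of_le' hr
    calc SDk (ZMod n) (k + (j + 4 + 1) - 1) + (j + 4 + 1 - 1) * (n - 1)
        = SDk (ZMod n) (k + 1 + (j + 4) - 1) + (j + 4 - 1) * (n - 1) + (n - 1) := by
          rw [show k + (j + 4 + 1) - 1 = k + 1 + (j + 4) - 1 by omega,
            show j + 4 + 1 - 1 = j + 4 - 1 + 1 by omega]
          ring
      _ ≤ SDk (Fin (j + 4) → ZMod n) (k + 1) + (n - 1) := Nat.add_le_add_right (ih (k + 1)) _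
      _ ≤ SDk (Fin (j + 4 + 1) → ZMod n) k := SDk_pi_zmod_succ_add_le hn (by omega) k

theorem SDk_pi_zmod_eq_of_DavenportD_eq (hn : 3 ≤ n) {r k : ℕ} (hr : 4 ≤ r)
    (hD : DavenportD (Fin r → ZMod n) = 1 + r * (n - 1)) (hk : n ≤ r + k) :
    SDk (Fin r → ZMod n) k = 1 + r * (n - 1) := by
  have : NeZero n := ⟨by omega⟩
  refine ((SDk_le_DavenportD _ k).trans hD.le).antisymm ?_
  have hcyclic : n ≤ SDk (ZMod n) (k + r - 1) := by
    have := min_le_SDk_zmod (n := n) (by omega) (k + r - 1)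
    omega
  calc 1 + r * (n - 1) = n + (r - 1) * (n - 1) := by
        obtain ⟨m, rfl⟩ := Nat.exists_eq_add_of_le' hn
        obtain ⟨j, rfl⟩ := Nat.exists_eq_add_of_le' hr
        simp only [Nat.add_succ_sub_one]
        ring
    _ ≤ SDk (ZMod n) (k + r - 1) + (r - 1) * (n - 1) := Nat.add_le_add_right hcyclic _
    _ ≤ SDk (Fin r → ZMod n) k := SDk_zmod_add_le_SDk_pi hn hr k

end Homocyclic

section RankThree

variable {n k : ℕ}

theorem card_add_two_mul_le_SDk_pi_three {N : Multiset ℕ} (hpos : ∀ x ∈ N, 0 < x)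
    (hsum : N.sum + 3 = n) (hk : cmul 1 N ≤ k) : card N + 2 * n ≤ SDk (Fin 3 → ZMod n) k := by
  have hn : 3 ≤ n := by omega
  have : NeZero n := ⟨by omega⟩
  have : Fact (1 < n) := ⟨by omega⟩
  have hne : (1 : ZMod n) ≠ 2 := by
    rw [← one_add_one_eq_two]
    simp
  obtain ⟨W, hW, hWcard⟩ := exists_isReplacement_pair hn (isSumOfDistinct_sub_two_zmod hn) hne
  have hmin : IsMinimalZeroSum ({1, 2} + N.map (Nat.cast : ℕ → ZMod n)) := by
    simpa using isMinimalZeroSum_map_natCast (by omega : n ≠ 0) (N := {1, 2} + N)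
      (by simpa [or_imp, forall_and] using hpos) (by rw [sum_add, sum_pair]; omega)
  have hinj : Set.InjOn (Nat.cast : ℕ → ZMod n) {x | x ∈ N} :=
    (CharP.natCast_injOn_Iio (ZMod n) n).mono fun x hx =>
      (Multiset.le_sum_of_mem hx).trans_lt (by omega)
  have hle := hW.card_add_card_le_SDk hmin ((cmul_one_map_of_injOn hinj).trans_le hk)
  rw [card_map, hWcard] at hle
  exact hle.trans (SDk_prod_pi_le (ZMod n) 2 k)

theorem exists_nodup_pos_sum_eq {t m : ℕ} (h : (t + 1) * (t + 2) ≤ 2 * m) :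
    ∃ D : Multiset ℕ, D.Nodup ∧ (∀ x ∈ D, 0 < x) ∧ card D = t + 1 ∧ D.sum = m := by
  have hsum : ((Multiset.range t).map Nat.succ).sum * 2 = t * (t + 1) := by
    have := Finset.sum_range_id_mul_two (t + 1)
    rw [Finset.sum_range_succ', add_zero, Nat.add_sub_cancel, mul_comm (t + 1)] at this
    exact this
  set s := ((Multiset.range t).map Nat.succ).sum
  have hlast : t + 1 ≤ m - s := by
    have : s * 2 + 2 * (t + 1) ≤ 2 * m := by rw [hsum]; linarith
    omega
  refine ⟨(m - s) ::ₘ (Multiset.range t).map Nat.succ, ?_, ?_, by simp, ?_⟩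
  · refine nodup_cons.2 ⟨fun hmem => ?_, (nodup_range t).map Nat.succ_injective⟩
    obtain ⟨i, hi, hi'⟩ := mem_map.1 hmem
    have := mem_range.1 hi
    omega
  · intro x hx
    rcases mem_cons.1 hx with rfl | hmem
    · omega
    · obtain ⟨i, -, rfl⟩ := mem_map.1 hmem
      exact i.succ_pos
  · rw [sum_cons]
    omega

theorem exists_floor_eq_add_one {m : ℕ} (hm : 1 ≤ m) :
    ∃ t : ℕ, ⌊(-1 + √(1 + 8 * m : ℝ)) / 2⌋ = t + 1 ∧ (t + 1) * (t + 2) ≤ 2 * m := by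
  have hm' : (1 : ℝ) ≤ m := by exact_mod_cast hm
  have hone : 1 ≤ ⌊(-1 + √(1 + 8 * m : ℝ)) / 2⌋ := by
    have : (3 : ℝ) ≤ √(1 + 8 * m) := Real.le_sqrt_of_sq_le (by linarith)
    rw [Int.le_floor]
    push_cast
    linarith
  obtain ⟨t, ht⟩ := Int.eq_ofNat_of_zero_le (sub_nonneg.2 hone)
  have hfloor : ⌊(-1 + √(1 + 8 * m : ℝ)) / 2⌋ = t + 1 := by omega
  refine ⟨t, hfloor, ?_⟩
  have hle : (2 * t + 3 : ℝ) ≤ √(1 + 8 * m) := by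
    have := Int.floor_le ((-1 + √(1 + 8 * m : ℝ)) / 2)
    rw [hfloor] at this
    push_cast at this
    linarith
  rw [Real.le_sqrt' (by positivity)] at hle
  have : ((t + 1) * (t + 2) : ℝ) ≤ 2 * m := by linarith
  exact_mod_cast this

theorem three_mul_sub_le_SDk_pi_three (hn : 3 ≤ n) (hk : n ≤ k + 3) :
    3 * n - 3 ≤ SDk (Fin 3 → ZMod n) k := by
  have hcmul : cmul 1 (replicate (n - 3) 1 : Multiset ℕ) ≤ k := by
    have := cmul_one_add_card_toFinset (replicate (n - 3) 1 : Multiset ℕ)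
    rw [card_replicate] at this
    omega
  have := card_add_two_mul_le_SDk_pi_three (n := n)
    (fun x hx => by simp [eq_of_mem_replicate hx]) (by simp [hn]) hcmul
  rw [card_replicate] at this
  omega

theorem add_two_mul_le_SDk_pi_three {t m : ℕ} (ht : (t + 1) * (t + 2) ≤ 2 * m) (k : ℕ) :
    k + (t + 1) + 2 * (m + k + 3) ≤ SDk (Fin 3 → ZMod (m + k + 3)) k := by
  obtain ⟨D, hD, hpos, hcard, hsum⟩ := exists_nodup_pos_sum_eq ht
  have hcmul : cmul 1 (D + replicate k 1) ≤ k := by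
    simpa [cmul_one_eq_zero_of_nodup hD] using cmul_one_add_le D (replicate k 1)
  have hle := card_add_two_mul_le_SDk_pi_three (n := m + k + 3) (fun x hx => by
    rcases mem_add.1 hx with h | h
    · exact hpos x h
    · simp [eq_of_mem_replicate h]) (by simp [hsum]) hcmul
  rw [card_add, card_replicate, hcard] at hle
  omega

theorem sub_max_le_SDk_pi_three (hn : 3 ≤ n) (k : ℕ) :
    (1 + 3 * ((n : ℤ) - 1)) -
        max 1 ((n : ℤ) - k - 2 -
          ⌊(-1 + Real.sqrt (((1 + 8 * max ((n : ℤ) - 3 - k) 0 : ℤ)) : ℝ)) / 2⌋) ≤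
      (SDk (Fin 3 → ZMod n) k : ℤ) := by
  rcases le_or_gt n (k + 3) with hnk | hnk
  · have := three_mul_sub_le_SDk_pi_three hn hnk
    omega
  · obtain ⟨m, rfl⟩ : ∃ m, n = m + k + 3 := ⟨n - k - 3, by omega⟩
    obtain ⟨t, hfloor, ht⟩ := exists_floor_eq_add_one (m := m) (by omega)
    have hmax : max (((m + k + 3 : ℕ) : ℤ) - 3 - k) 0 = m := by omega
    have := add_two_mul_le_SDk_pi_three ht k
    rw [hmax]
    push_cast [hfloor]
    omega

end RankThree

/-- Theorem (homocyclic groups): let `n ≥ 3`, `r ≥ 4` and `k ∈ ℕ₀`. Then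
`SD_k(C_n^r) ≥ SD_{k+r−1}(C_n) + (r−1)(n−1)`. Moreover, if
`D(C_n^r) = D*(C_n^r)` and `r ≥ n − k`, then `SD_k(C_n^r) = D*(C_n^r)`.
Additionally,
`SD_k(C_n^3) ≥ D*(C_n^3) − max{1, n − k − 2 − ⌊(−1 + √(1 + 8·max{n−3−k,0}))/2⌋}`. -/
theorem SDk_homocyclic_bounds (n r k : ℕ) (hn : 3 ≤ n) (hr : 4 ≤ r) :
    (SDk (ZMod n) (k + r - 1) + (r - 1) * (n - 1) ≤ SDk (Fin r → ZMod n) k) ∧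
    (DavenportD (Fin r → ZMod n) = 1 + r * (n - 1) → n ≤ r + k →
      SDk (Fin r → ZMod n) k = 1 + r * (n - 1)) ∧
    ((1 + 3 * ((n : ℤ) - 1)) -
        max 1 ((n : ℤ) - k - 2 -
          ⌊(-1 + Real.sqrt (((1 + 8 * max ((n : ℤ) - 3 - k) 0 : ℤ)) : ℝ)) / 2⌋) ≤
      (SDk (Fin 3 → ZMod n) k : ℤ)) :=
  ⟨SDk_zmod_add_le_SDk_pi hn hr k, SDk_pi_zmod_eq_of_DavenportD_eq hn hr,
    sub_max_le_SDk_pi_three hn k⟩
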